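/- arXiv:2101.11410 — 2 statements merged into one kernel-verified Lean document; each statement's English description precedes it below -/
import Mathlib

section
/- Let W be a complex Hilbert space, A = B(W) the C*-algebra of bounded linear operators on W, and M a Hilbert C*-module over A. Let ε > 0 and let q̂ ∈ M satisfy ‖q̂‖_M > ε and assume ⟨q̂, q̂⟩ is a compact operator on W. Then there exists b̂ ∈ A with ‖b̂‖_A < 1/ε such that q := q̂ b̂ is normalized (⟨q,q⟩ ≠ 0 and ⟨q,q⟩² = ⟨q,q⟩), and there exists b ∈ A such that ‖q̂ − q b‖_M ≤ ε. -/
/-- A (right) Hilbert C*-module over a C*-algebra `A`: a right `A`-module `M` with an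
`A`-valued inner product, `A`-linear in the second variable, satisfying the listed axioms,
whose norm is `‖u‖ = ‖⟨u,u⟩‖^(1/2)` (so that completeness of `M` as a normed group is
completeness for this norm). -/
structure HilbertCStarModule (A : Type*) (M : Type*) [CStarAlgebra A] [PartialOrder A]
    [StarOrderedRing A] [NormedAddCommGroup M] where
  smul : M → A → M
  inner : M → M → A
  add_smul : ∀ (u v : M) (c : A), smul (u + v) c = smul u c + smul v c
  smul_add : ∀ (u : M) (c d : A), smul u (c + d) = smul u c + smul u d
  smul_mul : ∀ (u : M) (c d : A), smul u (c * d) = smul (smul u c) d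
  smul_one : ∀ u : M, smul u 1 = u
  inner_add_right : ∀ u v w : M, inner u (v + w) = inner u v + inner u w
  inner_smul_right : ∀ (u v : M) (c : A), inner u (smul v c) = inner u v * c
  star_inner : ∀ u v : M, star (inner u v) = inner v u
  inner_self_nonneg : ∀ u : M, 0 ≤ inner u u
  inner_self_eq_zero : ∀ u : M, inner u u = 0 → u = 0
  norm_eq : ∀ u : M, ‖u‖ = Real.sqrt ‖inner u u‖

/-!
Let `a = ⟨q̂, q̂⟩`, let `P` be the spectral projection of `a` for `(ε², ∞)`, and let `b̂` be
`a ^ (-1/2)` on the range of `P` and zero on its complement, so that `‖b̂‖ < 1 / ε`. Then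
`q = q̂ b̂` satisfies `⟨q, q⟩ = b̂ a b̂ = P`, and for `b = ⟨q, q̂⟩ = b̂ a` the remainder
`q̂ - q b = q̂ (1 - P)` has square norm `‖(1 - P) a (1 - P)‖ ≤ ε²`; since `‖a‖ > ε²`, this also
shows `P ≠ 0`. Both `P` and `b̂` are continuous functions of `a` as soon as the spectrum of `a` does
not accumulate at `ε²` from the right. For compact `a` it does not: unit eigenvectors of a symmetric
operator for distinct eigenvalues `μ` with `‖μ‖ ≥ c > 0` have images at mutual distance at least
`c`, so there are only finitely many such `μ`.
-/

open Filter Module.End Set Topology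

section Compact

lemma finite_of_totallyBounded_of_pairwise_le_dist {X ι : Type*} [PseudoMetricSpace X] {s : Set X}
    (hs : TotallyBounded s) {c : ℝ} (hc : 0 < c) {f : ι → X} (hfs : ∀ i, f i ∈ s)
    (hf : Pairwise fun i j => c ≤ dist (f i) (f j)) : Finite ι := by
  obtain ⟨t, ht, hst⟩ := Metric.totallyBounded_iff.1 hs (c / 2) (half_pos hc)
  have hcenter : ∀ i, ∃ y : t, dist (f i) y < c / 2 := fun i => by
    simpa using hst (hfs i)
  choose center hdist using hcenter
  have : Finite t := ht.to_subtype
  refine Finite.of_injective center fun i j hij => by_contra fun hne => ?_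
  have hj : dist (f j) (center i) < c / 2 := hij ▸ hdist j
  linarith [hf hne, hdist i, dist_triangle_right (f i) (f j) (center i)]

lemma exists_norm_eq_one_apply_eq_smul_of_hasEigenvalue {𝕜 E : Type*} [RCLike 𝕜]
    [NormedAddCommGroup E] [NormedSpace 𝕜 E] {T : E →ₗ[𝕜] E} {μ : 𝕜} (hμ : HasEigenvalue T μ) :
    ∃ v : E, ‖v‖ = 1 ∧ T v = μ • v := by
  obtain ⟨v, hv⟩ := hμ.exists_hasEigenvector
  refine ⟨(‖v‖⁻¹ : 𝕜) • v, norm_smul_inv_norm hv.2, ?_⟩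
  rw [map_smul, hv.apply_eq_smul, smul_comm]

variable {𝕜 E : Type*} [RCLike 𝕜] [NormedAddCommGroup E] [InnerProductSpace 𝕜 E] {c : ℝ}

lemma finite_setOf_hasEigenvalue_and_le_norm {T : E →ₗ[𝕜] E} (hsymm : T.IsSymmetric)
    (hcomp : IsCompactOperator T) (hc : 0 < c) : {μ : 𝕜 | HasEigenvalue T μ ∧ c ≤ ‖μ‖}.Finite := by
  choose v hv_norm hv using fun μ : {μ : 𝕜 | HasEigenvalue T μ ∧ c ≤ ‖μ‖} =>
    exists_norm_eq_one_apply_eq_smul_of_hasEigenvalue μ.2.1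
  have horth : ∀ μ ν, μ ≠ ν → inner 𝕜 (v μ) (v ν) = 0 := fun μ ν hne =>
    hsymm.orthogonalFamily_eigenspaces (Subtype.coe_injective.ne hne)
      ⟨v μ, mem_eigenspace_iff.2 (hv μ)⟩ ⟨v ν, mem_eigenspace_iff.2 (hv ν)⟩
  refine finite_coe_iff.1 <| finite_of_totallyBounded_of_pairwise_le_dist
    (hcomp.isCompact_closure_image_closedBall 1).totallyBounded hc
    (fun μ => subset_closure ⟨v μ, by simp [hv_norm], rfl⟩) fun μ ν hne => ?_
  calc c ≤ ‖(μ : 𝕜)‖ := μ.2.2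
    _ = ‖inner 𝕜 (v μ) (T (v μ) - T (v ν))‖ := by
      simp [hv, inner_sub_right, inner_smul_right, horth μ ν hne, hv_norm]
    _ ≤ ‖v μ‖ * ‖T (v μ) - T (v ν)‖ := norm_inner_le_norm _ _
    _ = dist (T (v μ)) (T (v ν)) := by rw [hv_norm, one_mul, dist_eq_norm]

lemma finite_setOf_mem_spectrum_and_le_norm [CompleteSpace E] {T : E →L[𝕜] E}
    (hsymm : T.IsSymmetric) (hcomp : IsCompactOperator T) (hc : 0 < c) :
    {μ ∈ spectrum 𝕜 T | c ≤ ‖μ‖}.Finite :=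
  (finite_setOf_hasEigenvalue_and_le_norm hsymm hcomp hc).subset fun _ hμ =>
    ⟨(hcomp.hasEigenvalue_iff_mem_spectrum (norm_pos_iff.1 (hc.trans_le hμ.2))).2 hμ.1, hμ.2⟩

lemma eventually_nhdsGT_notMem_spectrum_of_isCompactOperator {W : Type*} [NormedAddCommGroup W]
    [InnerProductSpace ℂ W] [CompleteSpace W] {T : W →L[ℂ] W} (hT : IsSelfAdjoint T)
    (hcomp : IsCompactOperator T) (hc : 0 < c) : ∀ᶠ x in 𝓝[>] c, x ∉ spectrum ℝ T := by
  have hfin : ((↑) ⁻¹' {μ ∈ spectrum ℂ T | c ≤ ‖μ‖} : Set ℝ).Finite :=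
    (finite_setOf_mem_spectrum_and_le_norm hT.isSymmetric hcomp hc).preimage
      Complex.ofReal_injective.injOn
  filter_upwards [nhdsGT_le_nhdsNE c (nhdsNE_le_cofinite c hfin.eventually_cofinite_notMem),
    self_mem_nhdsWithin] with x hx hcx hmem
  refine hx ⟨spectrum.algebraMap_mem ℂ hmem, ?_⟩
  rw [Complex.norm_real]
  exact hcx.le.trans (le_abs_self x)

end Compact

lemma continuousOn_indicator_Ioi {X Y : Type*} [LinearOrder X] [TopologicalSpace X]
    [OrderClosedTopology X] [TopologicalSpace Y] [Zero Y] {s : Set X} {c : X} {f : X → Y}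
    (hs : ∀ᶠ x in 𝓝[>] c, x ∉ s) (hf : ContinuousOn f (s ∩ Ioi c)) :
    ContinuousOn ((Ioi c).indicator f) s := by
  intro x hx
  have hzero : (∀ᶠ y in 𝓝[s] x, y ≤ c) → x ≤ c →
      ContinuousWithinAt ((Ioi c).indicator f) s x := fun hle hxc =>
    continuousWithinAt_const.congr_of_eventuallyEq
      (hle.mono fun y hy => indicator_of_notMem hy.not_gt f) (indicator_of_notMem hxc.not_gt f)
  rcases lt_trichotomy x c with hlt | rfl | hgt
  · exact hzero ((eventually_le_nhds hlt).filter_mono nhdsWithin_le_nhds) hlt.le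
  · refine hzero ?_ le_rfl
    rw [eventually_nhdsWithin_iff] at hs ⊢
    exact hs.mono fun y hy hys => not_lt.1 fun hlt => hy hlt hys
  · have hfx : ContinuousWithinAt f s x :=
      (continuousWithinAt_inter (Ioi_mem_nhds hgt)).1 (hf x ⟨hx, hgt⟩)
    exact hfx.congr_of_eventuallyEq
      (nhdsWithin_le_nhds <| (eventually_gt_nhds hgt).mono fun y hy => indicator_of_mem hy f)
      (indicator_of_mem hgt f)

lemma cfc_mul_self_mul_cfc {R A : Type*} {p : A → Prop} [CommSemiring R] [StarRing R]
    [MetricSpace R] [IsTopologicalSemiring R] [ContinuousStar R] [TopologicalSpace A] [Ring A]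
    [StarRing A] [Algebra R A] [ContinuousFunctionalCalculus R A p] {a : A} (ha : p a) {f : R → R}
    (hf : ContinuousOn f (spectrum R a)) :
    cfc f a * a * cfc f a = cfc (fun x => f x * x * f x) a := by
  rw [cfc_mul (fun x => f x * x) f a (hf.mul continuousOn_id) hf,
    cfc_mul f (fun x => x) a hf continuousOn_id, cfc_id' R a]

section Algebraic

variable {A : Type*} [TopologicalSpace A] [Ring A] [StarRing A] [Algebra ℝ A]
  [ContinuousFunctionalCalculus ℝ A IsSelfAdjoint]

/-- The spectral projection of a self-adjoint element `a` for the interval `(c, ∞)`, given by the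
continuous functional calculus. It takes the junk value `0` unless `a` is self-adjoint and the
indicator function of `(c, ∞)` is continuous on its spectrum. -/
noncomputable def spectralProjectionIoi (c : ℝ) (a : A) : A :=
  cfc ((Ioi c).indicator 1) a

/-- The inverse square root of the part of a self-adjoint element `a` above `c`: the function equal
to `x ^ (-1/2)` for `x > c` and to `0` for `x ≤ c`, applied to `a`. It takes the junk value `0`
unless `a` is self-adjoint and this function is continuous on its spectrum. -/
noncomputable def invSqrtIoi (c : ℝ) (a : A) : A :=
  cfc ((Ioi c).indicator fun x => (√x)⁻¹) a

variable {a : A} {c : ℝ}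

lemma isSelfAdjoint_invSqrtIoi : IsSelfAdjoint (invSqrtIoi c a) :=
  cfc_predicate _ a

lemma isStarProjection_spectralProjectionIoi (hgap : ∀ᶠ x in 𝓝[>] c, x ∉ spectrum ℝ a) :
    IsStarProjection (spectralProjectionIoi c a) where
  isIdempotentElem := by
    have hχ : ContinuousOn ((Ioi c).indicator (1 : ℝ → ℝ)) (spectrum ℝ a) :=
      continuousOn_indicator_Ioi hgap continuousOn_const
    rw [IsIdempotentElem, spectralProjectionIoi, ← cfc_mul _ _ a hχ hχ]
    refine congrArg (cfc · a) (funext fun x => ?_)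
    by_cases hx : x ∈ Ioi c <;> simp [hx]
  isSelfAdjoint := cfc_predicate _ a

lemma continuousOn_indicator_Ioi_inv_sqrt {s : Set ℝ} (hc : 0 ≤ c) (hs : ∀ᶠ x in 𝓝[>] c, x ∉ s) :
    ContinuousOn ((Ioi c).indicator fun x => (√x)⁻¹) s :=
  continuousOn_indicator_Ioi hs <| Real.continuous_sqrt.continuousOn.inv₀ fun _ hx =>
    (Real.sqrt_pos.2 (hc.trans_lt hx.2)).ne'

lemma invSqrtIoi_mul_self_mul_invSqrtIoi (ha : IsSelfAdjoint a) (hc : 0 ≤ c)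
    (hgap : ∀ᶠ x in 𝓝[>] c, x ∉ spectrum ℝ a) :
    invSqrtIoi c a * a * invSqrtIoi c a = spectralProjectionIoi c a := by
  rw [invSqrtIoi, cfc_mul_self_mul_cfc ha (continuousOn_indicator_Ioi_inv_sqrt hc hgap)]
  refine congrArg (cfc · a) (funext fun x => ?_)
  by_cases hx : c < x
  · have hx₀ : 0 < x := hc.trans_lt hx
    have hsqrt : √x ≠ 0 := (Real.sqrt_pos.2 hx₀).ne'
    simp only [mem_Ioi, hx, indicator_of_mem, Pi.one_apply]
    field_simp
    exact (Real.sq_sqrt hx₀.le).symm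
  · simp [hx]

lemma commute_invSqrtIoi (ha : IsSelfAdjoint a) : Commute (invSqrtIoi c a) a := by
  simpa only [invSqrtIoi, cfc_id' ℝ a] using
    cfc_commute_cfc ((Ioi c).indicator fun x => (√x)⁻¹) (fun x => x) a

end Algebraic

section Norm

variable {A : Type*} [NormedRing A] [StarRing A] [NormedAlgebra ℝ A]
  [IsometricContinuousFunctionalCalculus ℝ A IsSelfAdjoint] {a : A} {c : ℝ}

lemma norm_invSqrtIoi_lt (hc : 0 < c) : ‖invSqrtIoi c a‖ < (√c)⁻¹ := by
  refine norm_cfc_lt (inv_pos.2 (Real.sqrt_pos.2 hc)) fun x _ => ?_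
  by_cases hx : c < x
  · rw [indicator_of_mem (mem_Ioi.2 hx), Real.norm_of_nonneg (by positivity)]
    exact inv_strictAnti₀ (Real.sqrt_pos.2 hc) (Real.sqrt_lt_sqrt hc.le hx)
  · simpa [hx] using hc

lemma norm_one_sub_spectralProjectionIoi_conj_le [PartialOrder A] [StarOrderedRing A]
    [NonnegSpectrumClass ℝ A] (ha : 0 ≤ a) (hc : 0 ≤ c) (hgap : ∀ᶠ x in 𝓝[>] c, x ∉ spectrum ℝ a) :
    ‖(1 - spectralProjectionIoi c a) * a * (1 - spectralProjectionIoi c a)‖ ≤ c := by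
  have hsa : IsSelfAdjoint a := .of_nonneg ha
  have hχ : ContinuousOn ((Ioi c).indicator (1 : ℝ → ℝ)) (spectrum ℝ a) :=
    continuousOn_indicator_Ioi hgap continuousOn_const
  rw [spectralProjectionIoi, ← cfc_const_one ℝ a, ← cfc_sub _ _ a continuousOn_const hχ,
    cfc_mul_self_mul_cfc hsa (f := fun x => 1 - (Ioi c).indicator 1 x) (continuousOn_const.sub hχ)]
  refine norm_cfc_le hc fun x hx => ?_
  have hx₀ : 0 ≤ x := spectrum_nonneg_of_nonneg ha hx
  by_cases hcx : c < x
  · simpa [hcx] using hc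
  · simpa [hcx, abs_of_nonneg hx₀] using not_lt.1 hcx

lemma spectralProjectionIoi_ne_zero [PartialOrder A] [StarOrderedRing A]
    [NonnegSpectrumClass ℝ A] (ha : 0 ≤ a) (hc : 0 ≤ c) (hgap : ∀ᶠ x in 𝓝[>] c, x ∉ spectrum ℝ a)
    (hca : c < ‖a‖) : spectralProjectionIoi c a ≠ 0 := fun hP => by
  have hle := norm_one_sub_spectralProjectionIoi_conj_le ha hc hgap
  rw [hP, sub_zero, one_mul, mul_one] at hle
  exact hca.not_ge hle

end Norm

namespace HilbertCStarModule

variable {A M : Type*} [CStarAlgebra A] [PartialOrder A] [StarOrderedRing A]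
  [NormedAddCommGroup M] (H : HilbertCStarModule A M)

lemma inner_smul_smul (u v : M) (c d : A) :
    H.inner (H.smul u c) (H.smul v d) = star c * H.inner u v * d := by
  rw [H.inner_smul_right, ← H.star_inner, H.inner_smul_right, star_mul, H.star_inner]

lemma sub_smul_smul (u : M) (c d : A) :
    u - H.smul (H.smul u c) d = H.smul u (1 - c * d) := by
  rw [sub_eq_iff_eq_add, ← H.smul_mul, ← H.smul_add, sub_add_cancel, H.smul_one]

lemma norm_sq_eq (u : M) : ‖u‖ ^ 2 = ‖H.inner u u‖ := by
  rw [H.norm_eq, Real.sq_sqrt (norm_nonneg _)]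

end HilbertCStarModule

theorem normalization_in_module_over_BW_general {A M : Type*} [CStarAlgebra A] [PartialOrder A]
    [StarOrderedRing A] [NormedAddCommGroup M] (H : HilbertCStarModule A M) {ε : ℝ} (hε : 0 < ε)
    {qhat : M} (hq_norm : ε < ‖qhat‖)
    (hgap : ∀ᶠ x in 𝓝[>] (ε ^ 2), x ∉ spectrum ℝ (H.inner qhat qhat)) :
    ∃ bhat : A, ‖bhat‖ < 1 / ε ∧
      (H.inner (H.smul qhat bhat) (H.smul qhat bhat) ≠ 0 ∧
        IsIdempotentElem (H.inner (H.smul qhat bhat) (H.smul qhat bhat))) ∧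
      ∃ b : A, ‖qhat - H.smul (H.smul qhat bhat) b‖ ≤ ε := by
  set a := H.inner qhat qhat
  have ha : 0 ≤ a := H.inner_self_nonneg qhat
  have hsa : IsSelfAdjoint a := .of_nonneg ha
  have hε₂ : 0 ≤ ε ^ 2 := sq_nonneg ε
  have hnorm : ε ^ 2 < ‖a‖ := by
    rw [← H.norm_sq_eq]
    gcongr
  have hP := isStarProjection_spectralProjectionIoi hgap
  refine ⟨invSqrtIoi (ε ^ 2) a, ?_, ?_, invSqrtIoi (ε ^ 2) a * a, ?_⟩
  · simpa only [Real.sqrt_sq hε.le, one_div] using norm_invSqrtIoi_lt (a := a) (pow_pos hε 2)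
  · rw [H.inner_smul_smul, isSelfAdjoint_invSqrtIoi.star_eq,
      invSqrtIoi_mul_self_mul_invSqrtIoi hsa hε₂ hgap]
    exact ⟨spectralProjectionIoi_ne_zero ha hε₂ hgap hnorm, hP.isIdempotentElem⟩
  · rw [← sq_le_sq₀ (norm_nonneg _) hε.le, H.sub_smul_smul, H.norm_sq_eq, H.inner_smul_smul,
      (commute_invSqrtIoi hsa).eq, ← mul_assoc, invSqrtIoi_mul_self_mul_invSqrtIoi hsa hε₂ hgap,
      hP.one_sub.isSelfAdjoint.star_eq]
    exact norm_one_sub_spectralProjectionIoi_conj_le ha hε₂ hgap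

/-- **Normalization in Hilbert C*-modules over `B(W)`.** If `‖q̂‖ > ε` and `⟨q̂, q̂⟩` is a
compact operator, then there is `b̂` with `‖b̂‖ < 1/ε` such that `q = q̂ b̂` is normalized
(`⟨q,q⟩ ≠ 0` and `⟨q,q⟩² = ⟨q,q⟩`), and some `b` with `‖q̂ − q b‖ ≤ ε`. -/
theorem normalization_in_module_over_BW
    {W : Type*} [NormedAddCommGroup W] [InnerProductSpace ℂ W] [CompleteSpace W]
    {M : Type*} [NormedAddCommGroup M] [CompleteSpace M]
    (H : HilbertCStarModule (W →L[ℂ] W) M)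
    (ε : ℝ) (hε : 0 < ε) (qhat : M) (hq_norm : ε < ‖qhat‖)
    (h_compact : IsCompactOperator ⇑(H.inner qhat qhat)) :
    ∃ bhat : W →L[ℂ] W, ‖bhat‖ < 1 / ε ∧
      (H.inner (H.smul qhat bhat) (H.smul qhat bhat) ≠ 0 ∧
        H.inner (H.smul qhat bhat) (H.smul qhat bhat) *
            H.inner (H.smul qhat bhat) (H.smul qhat bhat) =
          H.inner (H.smul qhat bhat) (H.smul qhat bhat)) ∧
      ∃ b : W →L[ℂ] W, ‖qhat - H.smul (H.smul qhat bhat) b‖ ≤ ε :=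
  normalization_in_module_over_BW_general H hε hq_norm <|
    eventually_nhdsGT_notMem_spectrum_of_isCompactOperator
      (.of_nonneg (H.inner_self_nonneg qhat)) h_compact (pow_pos hε 2)
end

section
/- Let Ω be a second-countable topological space equipped with its Borel σ-algebra and a finite Borel measure ν, let 𝒴 be a topological space, and let k̃ : 𝒴 × 𝒴 → ℂ be a bounded continuous positive definite kernel. Let X = C(Ω, 𝒴) be the set of continuous maps from Ω to 𝒴 and W = L²(Ω, ν). Then for all x, y ∈ X the formula (k(x,y) w)(s) = ∫_Ω k̃(x(s), y(t)) w(t) dν(t) defines a bounded linear operator k(x,y) on W, and the resulting map k : X × X → B(W) is a B(W)-valued positive definite kernel: k(x,y) = k(y,x)* for all x, y ∈ X, and for every n ∈ ℕ, c_1,…,c_n ∈ B(W), and x_1,…,x_n ∈ X, the operator Σ_{i,j=1}^n c_i* k(x_i,x_j) c_j is positive. -/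
open MeasureTheory

/-!
A positive definite kernel `kt` is the reproducing kernel of a Hilbert space `H` of functions on
`Y`. Composition with `x : Ω → Y` is a bounded operator `A x : H → L²(ν)`, `f ↦ f ∘ x`, and the
reproducing property says that `A x * (A y)†` is the integral operator with kernel
`kt (x s) (y t)`. So `k x y = A x * (A y)†` is a Gram matrix of operators, whence the symmetry,
and `∑ p, ∑ q, (c p)† * k (x p) (x q) * c q = T† * T` for `T = ∑ p, (A (x p))† * c p`.
-/

section CompositionOperator

open Filter Topology

variable {𝕜 Ω Y V H : Type*} [RCLike 𝕜] [NormedAddCommGroup V] [InnerProductSpace 𝕜 V]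
  [NormedAddCommGroup H] [InnerProductSpace 𝕜 H] [RKHS 𝕜 H Y V] [MeasurableSpace Ω]
  {ν : Measure Ω} {x : Ω → Y} {p : ENNReal}

/-- The linear map `f ↦ f ∘ x` from a reproducing kernel Hilbert space `H` of functions on `Y` to
`Lᵖ(ν)`, for `x` such that all these compositions are in `Lᵖ(ν)`. -/
noncomputable def rkhsCompLpₗ (hx : ∀ f : H, MemLp (fun s => f (x s)) p ν) : H →ₗ[𝕜] Lp V p ν where
  toFun f := (hx f).toLp
  map_add' f g := by simp only [← MemLp.toLp_add, RKHS.coe_add]; rfl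
  map_smul' c f := by simp only [← MemLp.toLp_const_smul, RKHS.coe_smul]; rfl

variable [Fact (1 ≤ p)]

theorem eq_rkhsCompLpₗ_of_tendsto (hx : ∀ f : H, MemLp (fun s => f (x s)) p ν) {f : ℕ → H}
    {g : H} {h : Lp V p ν} (hf : Tendsto f atTop (𝓝 g))
    (hh : Tendsto (rkhsCompLpₗ hx ∘ f) atTop (𝓝 h)) : h = rkhsCompLpₗ hx g := by
  obtain ⟨φ, hφ, h_ae⟩ := (tendstoInMeasure_of_tendsto_Lp hh).exists_seq_tendsto_ae
  have h_coe : ∀ᵐ s ∂ν, ∀ n, (rkhsCompLpₗ hx (f n) : Ω → V) s = f n (x s) :=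
    ae_all_iff.mpr fun n => (hx (f n)).coeFn_toLp
  refine Lp.ext ?_
  filter_upwards [h_ae, h_coe, (hx g).coeFn_toLp] with s hs_lim hs_coe hs_g
  have h_eval : Tendsto (fun n => f (φ n) (x s)) atTop (𝓝 (g (x s))) :=
    ((RKHS.continuous_eval (x s)).tendsto g).comp (hf.comp hφ.tendsto_atTop)
  exact (tendsto_nhds_unique hs_lim (h_eval.congr fun n => (hs_coe (φ n)).symm)).trans hs_g.symm

variable [CompleteSpace V] [CompleteSpace H]

/-- The composition operator `f ↦ f ∘ x` as a bounded operator from `H` to `Lᵖ(ν)`, the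
boundedness being an instance of the closed graph theorem. -/
noncomputable def rkhsCompLp (hx : ∀ f : H, MemLp (fun s => f (x s)) p ν) : H →L[𝕜] Lp V p ν :=
  ContinuousLinearMap.ofSeqClosedGraph fun _ _ _ => eq_rkhsCompLpₗ_of_tendsto hx

theorem coeFn_rkhsCompLp (hx : ∀ f : H, MemLp (fun s => f (x s)) p ν) (f : H) :
    rkhsCompLp hx f =ᵐ[ν] fun s => f (x s) :=
  (hx f).coeFn_toLp

theorem inner_adjoint_rkhsCompLp_apply (hx : ∀ f : H, MemLp (fun s => f (x s)) 2 ν)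
    (w : Lp V 2 ν) (u : Y) (v : V) :
    inner 𝕜 v ((rkhsCompLp hx).adjoint w u) =
      ∫ t, inner 𝕜 (RKHS.kernel H (x t) u v) (w t) ∂ν := by
  rw [← RKHS.kerFun_inner, ContinuousLinearMap.adjoint_inner_right, L2.inner_def]
  refine integral_congr_ae ?_
  filter_upwards [coeFn_rkhsCompLp hx (RKHS.kerFun H u v)] with t ht
  rw [ht, RKHS.kerFun_apply]

theorem aestronglyMeasurable_rkhs_comp
    (hx : ∀ u v, AEStronglyMeasurable (fun s => RKHS.kernel H (x s) u v) ν) (f : H) :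
    AEStronglyMeasurable (fun s => f (x s)) ν := by
  have h_span : ∀ g ∈ Submodule.span 𝕜 {RKHS.kerFun H u v | (u) (v)},
      AEStronglyMeasurable (fun s => g (x s)) ν := by
    intro g hg
    induction hg using Submodule.span_induction with
    | mem g hg =>
      obtain ⟨u, v, rfl⟩ := hg
      simpa only [RKHS.kerFun_apply] using hx u v
    | zero => simpa only [RKHS.coe_zero] using! aestronglyMeasurable_const
    | add g₁ g₂ _ _ h₁ h₂ => simpa only [RKHS.coe_add] using! h₁.add h₂
    | smul c g _ h => simpa only [RKHS.coe_smul] using! h.const_smul c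
  have hf : f ∈ (Submodule.span 𝕜 {RKHS.kerFun H u v | (u) (v)}).topologicalClosure :=
    RKHS.kerFun_dense H ▸ Submodule.mem_top
  obtain ⟨g, hg_mem, hg_lim⟩ := mem_closure_iff_seq_limit.mp hf
  exact aestronglyMeasurable_of_tendsto_ae atTop (fun n => h_span (g n) (hg_mem n))
    (ae_of_all ν fun s => ((RKHS.continuous_eval (x s)).tendsto f).comp hg_lim)

theorem memLp_two_rkhs_comp
    (hx : ∀ u v, AEStronglyMeasurable (fun s => RKHS.kernel H (x s) u v) ν)
    (h_diag : HasFiniteIntegral (fun s => RKHS.kernel H (x s) (x s)) ν) (f : H) :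
    MemLp (fun s => f (x s)) 2 ν := by
  have hf := aestronglyMeasurable_rkhs_comp hx f
  refine (memLp_two_iff_integrable_sq_norm hf).mpr ⟨hf.norm.pow 2, ?_⟩
  refine (h_diag.norm.const_mul (‖f‖ ^ 2)).mono' (ae_of_all ν fun s => ?_)
  calc ‖‖f (x s)‖ ^ 2‖ = ‖f (x s)‖ ^ 2 := Real.norm_of_nonneg (sq_nonneg _)
    _ ≤ (‖f‖ * √‖RKHS.kernel H (x s) (x s)‖) ^ 2 := by gcongr; exact RKHS.norm_apply_le f (x s)
    _ = ‖f‖ ^ 2 * ‖RKHS.kernel H (x s) (x s)‖ := by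
      rw [mul_pow, Real.sq_sqrt (norm_nonneg _)]

end CompositionOperator

section ScalarKernel

open scoped ComplexOrder

variable {𝕜 Y : Type*} [RCLike 𝕜] {k : Matrix Y Y 𝕜}

theorem posSemidef_of_re_sum_nonneg (hk : k.IsHermitian)
    (h_nonneg : ∀ (n : ℕ) (α : Fin n → 𝕜) (u : Fin n → Y),
      0 ≤ RCLike.re (∑ p, ∑ q, star (α p) * α q * k (u p) (u q))) :
    k.PosSemidef := by
  refine ⟨hk, fun α => RCLike.nonneg_iff.mpr ⟨?_, RCLike.conj_eq_iff_im.mp ?_⟩⟩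
  · let e := α.support.equivFin.symm
    convert! h_nonneg α.support.card (fun p => α (e p)) (fun p => e p) using 2
    simp only [Finsupp.sum, ← Finset.sum_coe_sort α.support, ← e.sum_comp,
      mul_right_comm (star (α _)) (k _ _)]
  · simp only [map_finsuppSum, map_mul, ← RCLike.star_def, star_star, hk.apply]
    rw [Finsupp.sum_comm]
    simp only [mul_comm, mul_assoc]

/-- `RKHS.OfKernel` takes operator-valued kernels; this lets it be applied to a scalar kernel, whose
values are viewed as multiplication operators on `𝕜`. -/
theorem posSemidef_map_toSpanSingleton (hk : k.PosSemidef) :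
    (k.map (ContinuousLinearMap.toSpanSingleton 𝕜)).PosSemidef := by
  have h_iff := (RKHS.posSemidef_tfae (K := k.map (ContinuousLinearMap.toSpanSingleton 𝕜))).out 0 2
  refine h_iff.mpr ⟨Matrix.IsHermitian.ext fun u v => ?_, fun α => ?_⟩
  · refine ContinuousLinearMap.ext_ring (ext_inner_right 𝕜 fun c => ?_)
    rw [ContinuousLinearMap.star_eq_adjoint, ContinuousLinearMap.adjoint_inner_left]
    simp [← hk.isHermitian.apply u v]
  · convert! (RCLike.nonneg_iff.mp (hk.2 α)).1 using 2
    refine Finsupp.sum_congr fun u _ => Finsupp.sum_congr fun v _ => ?_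
    rw [← hk.isHermitian.apply u v]
    simp [mul_comm, mul_left_comm]

end ScalarKernel

section Gram

variable {𝕜 ι E F : Type*} [RCLike 𝕜] [NormedAddCommGroup E] [InnerProductSpace 𝕜 E]
  [CompleteSpace E] [NormedAddCommGroup F] [InnerProductSpace 𝕜 F] [CompleteSpace F]

theorem isPositive_sum_sum_adjoint_comp (s : Finset ι) (T : ι → E →L[𝕜] F) :
    (∑ p ∈ s, ∑ q ∈ s, (T p).adjoint ∘L T q).IsPositive := by
  have h_factor : ∑ p ∈ s, ∑ q ∈ s, (T p).adjoint ∘L T q =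
      (∑ p ∈ s, T p).adjoint ∘L ∑ q ∈ s, T q := by
    rw [map_sum, ContinuousLinearMap.finsetSum_comp]
    simp only [ContinuousLinearMap.comp_finsetSum]
  exact h_factor ▸ ContinuousLinearMap.isPositive_adjoint_comp_self _

end Gram

open scoped ComplexOrder in
theorem integral_operator_valued_pdk_general
    {𝕜 Ω Y ι : Type*} [RCLike 𝕜] [MeasurableSpace Ω] (ν : Measure Ω) (kt : Matrix Y Y 𝕜)
    (h_pd : kt.PosSemidef) (x : ι → Ω → Y)
    (h_meas : ∀ i u, AEStronglyMeasurable (fun s => kt (x i s) u) ν)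
    (h_diag : ∀ i, HasFiniteIntegral (fun s => kt (x i s) (x i s)) ν) :
    ∃ k : ι → ι → (Lp 𝕜 2 ν →L[𝕜] Lp 𝕜 2 ν),
      (∀ i j (w : Lp 𝕜 2 ν),
        ∀ᵐ s ∂ν, (k i j w : Ω → 𝕜) s = ∫ t, kt (x i s) (x j t) * w t ∂ν) ∧
      (∀ i j, k i j = star (k j i)) ∧
      (∀ (n : ℕ) (c : Fin n → (Lp 𝕜 2 ν →L[𝕜] Lp 𝕜 2 ν)) (i : Fin n → ι),
        (∑ p, ∑ q, star (c p) * k (i p) (i q) * c q).IsPositive) := by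
  let K := kt.map (ContinuousLinearMap.toSpanSingleton 𝕜)
  have : Fact K.PosSemidef := ⟨posSemidef_map_toSpanSingleton h_pd⟩
  have h_memLp : ∀ i (f : RKHS.OfKernel K), MemLp (fun s => f (x i s)) 2 ν := fun i =>
    memLp_two_rkhs_comp (fun u c => by simpa [K] using (h_meas i u).const_mul c)
      ((h_diag i).congr' (ae_of_all ν fun s => by simp [K]))
  let A := fun i => rkhsCompLp (h_memLp i)
  refine ⟨fun i j => A i ∘L (A j).adjoint, fun i j w => ?_, fun i j => ?_, fun n c i => ?_⟩
  · filter_upwards [coeFn_rkhsCompLp (h_memLp i) ((A j).adjoint w)] with s hs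
    calc _ = inner 𝕜 1 ((A j).adjoint w (x i s)) := by simpa using hs
      _ = ∫ t, inner 𝕜 (RKHS.kernel (RKHS.OfKernel K) (x j t) (x i s) 1) (w t) ∂ν :=
        inner_adjoint_rkhsCompLp_apply (h_memLp j) w (x i s) 1
      _ = ∫ t, kt (x i s) (x j t) * w t ∂ν := by
        congr! 2 with t
        rw [← h_pd.isHermitian.apply (x i s)]
        simp [K, mul_comm]
  · simp [ContinuousLinearMap.star_eq_adjoint, ContinuousLinearMap.adjoint_comp]
  · simpa only [ContinuousLinearMap.adjoint_comp, ContinuousLinearMap.adjoint_adjoint] using!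
      isPositive_sum_sum_adjoint_comp Finset.univ fun p => (A (i p)).adjoint ∘L c p

/-- **The integral-operator-valued positive definite kernel on functional data.** Let `Ω` be a
second-countable topological space with a finite Borel measure `ν`, `Y` a topological space,
and `kt : Y × Y → ℂ` a bounded continuous positive definite kernel. Then for all continuous
`x y : C(Ω, Y)` the formula `(k x y w) s = ∫ kt (x s) (y t) * w t dν t` defines a bounded
linear operator on `W = L²(Ω, ν)`, and the resulting map `k` is a `B(W)`-valued positive
definite kernel: `k x y = (k y x)*` and all `∑ p q, (c p)* k (x p) (x q) (c q)` are positive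
operators. -/
theorem integral_operator_valued_pdk
    {Ω : Type*} [TopologicalSpace Ω] [MeasurableSpace Ω] [BorelSpace Ω]
    [SecondCountableTopology Ω] (ν : Measure Ω) [IsFiniteMeasure ν]
    {Y : Type*} [TopologicalSpace Y]
    (kt : Y → Y → ℂ)
    (h_cont : Continuous fun p : Y × Y => kt p.1 p.2)
    (h_bdd : ∃ C : ℝ, ∀ u v : Y, ‖kt u v‖ ≤ C)
    (h_herm : ∀ u v : Y, kt u v = starRingEnd ℂ (kt v u))
    (h_pd : ∀ (n : ℕ) (α : Fin n → ℂ) (u : Fin n → Y),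
      0 ≤ (∑ p, ∑ q, starRingEnd ℂ (α p) * α q * kt (u p) (u q)).re ∧
        (∑ p, ∑ q, starRingEnd ℂ (α p) * α q * kt (u p) (u q)).im = 0) :
    ∃ k : C(Ω, Y) → C(Ω, Y) → (Lp ℂ 2 ν →L[ℂ] Lp ℂ 2 ν),
      (∀ (x y : C(Ω, Y)) (w : Lp ℂ 2 ν),
        ∀ᵐ s ∂ν, (k x y w : Ω → ℂ) s = ∫ t, kt (x s) (y t) * w t ∂ν) ∧
      (∀ x y : C(Ω, Y), k x y = star (k y x)) ∧
      (∀ (n : ℕ) (c : Fin n → (Lp ℂ 2 ν →L[ℂ] Lp ℂ 2 ν)) (x : Fin n → C(Ω, Y)),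
        (∑ p, ∑ q, star (c p) * k (x p) (x q) * c q).IsPositive) := by
  obtain ⟨C, hC⟩ := h_bdd
  refine integral_operator_valued_pdk_general ν (Matrix.of kt) ?_ (fun x : C(Ω, Y) => x) ?_ ?_
  · exact posSemidef_of_re_sum_nonneg (Matrix.IsHermitian.ext fun u v => (h_herm u v).symm)
      fun n α u => (h_pd n α u).1
  · intro x u
    exact (h_cont.comp (x.continuous.prodMk continuous_const)).aestronglyMeasurable
  · exact fun x => .of_bounded (ae_of_all ν fun s => hC (x s) (x s))
end
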